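/- arXiv:2306.17800 — 3 statements merged into one kernel-verified Lean document; each statement's English description precedes it below -/
import Mathlib

section
/- The gluing operation on interval partitions is associative: for all interval partitions 𝓘, 𝓘', 𝓘'' of finite subsets of ℕ≥1, (𝓘 ⋎ 𝓘') ⋎ 𝓘'' = 𝓘 ⋎ (𝓘' ⋎ 𝓘''). -/
/-!
Gluing is best described on points rather than on blocks. For a family `S` of sets let `ptRel S` be
the equivalence relation on points generated by lying in a common member of `S`, and let `comp S`
be the set of its classes that meet `⋃₀ S`. As long as all blocks are nonempty, two blocks
of `S` are linked by a chain of intersecting blocks exactly when their points are related by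
`ptRel S`, so `glue P Q = comp (P ∪ Q)` (`glue_eq_comp`). Moreover, replacing a subfamily `S` by
its components does not change the generated relation, so `comp (comp S ∪ T) = comp (S ∪ T)`
(`comp_comp_union`). Hence both iterated gluings equal `comp (I ∪ I' ∪ I'')`.
-/

open Set

/-- A block: a nonempty interval of consecutive positive integers. -/
def IsIntervalBlock (B : Set ℕ) : Prop :=
  B.Nonempty ∧ (∀ x ∈ B, 1 ≤ x) ∧
    ∀ x ∈ B, ∀ z ∈ B, ∀ y : ℕ, x ≤ y → y ≤ z → y ∈ B

/-- An interval partition of a finite subset of the positive integers: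
a family of pairwise disjoint nonempty intervals with finite ground set. -/
def IsIntervalPartition (P : Set (Set ℕ)) : Prop :=
  (⋃₀ P).Finite ∧ (∀ B ∈ P, IsIntervalBlock B) ∧
    ∀ B ∈ P, ∀ C ∈ P, B ≠ C → B ∩ C = ∅

/-- An interval partition with prescribed ground set `A`. -/
def IsIntervalPartitionOf (P : Set (Set ℕ)) (A : Set ℕ) : Prop :=
  IsIntervalPartition P ∧ ⋃₀ P = A

/-- Standardized interval partitions: interval partitions of `{1, …, n}`. -/
def IsStdIP (P : Set (Set ℕ)) : Prop :=
  IsIntervalPartition P ∧ ∃ n : ℕ, ⋃₀ P = Set.Icc 1 n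

/-- Refinement order: same ground set, and every block of `P`
is contained in some block of `Q`. -/
def IPle (P Q : Set (Set ℕ)) : Prop :=
  ⋃₀ P = ⋃₀ Q ∧ ∀ B ∈ P, ∃ C ∈ Q, B ⊆ C

/-- The equivalence relation on blocks generated by having nonempty
intersection (among members of `S`). -/
def glueRel (S : Set (Set ℕ)) : Set ℕ → Set ℕ → Prop :=
  Relation.EqvGen fun X Y => X ∈ S ∧ Y ∈ S ∧ (X ∩ Y).Nonempty

/-- Gluing of two interval partitions. -/
def glue (P Q : Set (Set ℕ)) : Set (Set ℕ) :=
  (fun T => ⋃₀ {X ∈ P ∪ Q | glueRel (P ∪ Q) T X}) '' (P ∪ Q)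

/-- The relation on `A` generated by `y = x + 1`. -/
def cliqueRel (A : Set ℕ) : ℕ → ℕ → Prop :=
  Relation.EqvGen fun x y => x ∈ A ∧ y ∈ A ∧ y = x + 1

/-- `cliques A`: the coarsest interval partition of `A`. -/
def cliques (A : Set ℕ) : Set (Set ℕ) :=
  (fun x => {y ∈ A | cliqueRel A x y}) '' A

/-- `𝓘(A)`: the interval partition of `A ∩ ⋃₀ 𝓘` induced by `𝓘`. -/
def restrictIP (P : Set (Set ℕ)) (A : Set ℕ) : Set (Set ℕ) :=
  {Z | Z ≠ ∅ ∧ ∃ B ∈ P, ∃ c ∈ cliques A, Z = B ∩ c}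

/-- The unique order preserving map sending a finite `S ⊆ ℕ` onto `{1,…,|S|}`. -/
noncomputable def stdMap (S : Set ℕ) (x : ℕ) : ℕ := {y ∈ S | y ≤ x}.ncard

/-- Standardization of an interval partition. -/
noncomputable def stdIP (P : Set (Set ℕ)) : Set (Set ℕ) :=
  (fun B => stdMap (⋃₀ P) '' B) '' P

/-- Shifting all blocks of a partition up by `m`. -/
def shiftIP (m : ℕ) (P : Set (Set ℕ)) : Set (Set ℕ) :=
  (fun B => (fun x => x + m) '' B) '' P

/-- Concatenation of standardized interval partitions. -/
noncomputable def concatIP (P Q : Set (Set ℕ)) : Set (Set ℕ) :=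
  P ∪ shiftIP (⋃₀ P).ncard Q

/-- Quasi-shuffle section coefficient `c(𝔰,𝔱;𝔤)`. -/
noncomputable def secCoeff (s t g : Set (Set ℕ)) : ℕ :=
  {p : Set ℕ × Set ℕ | p.1 ∪ p.2 = ⋃₀ g ∧
      ∃ I I' : Set (Set ℕ), IsIntervalPartitionOf I p.1 ∧ IsIntervalPartitionOf I' p.2 ∧
        stdIP I = s ∧ stdIP I' = t ∧ glue I I' = g}.ncard

/-- The signature pairing `⟨IPC(𝔏), 𝔰⟩`. -/
noncomputable def IPC (L s : Set (Set ℕ)) : ℕ :=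
  {A : Set ℕ | A ⊆ ⋃₀ L ∧ IPle s (stdIP (restrictIP L A))}.ncard

open Classical in
/-- The unique refinement `𝓘_𝔰` of `𝓘` with standardization `𝔰` (junk value otherwise). -/
noncomputable def refineTo (P s : Set (Set ℕ)) : Set (Set ℕ) :=
  if h : ∃ Q : Set (Set ℕ), IsIntervalPartition Q ∧ IPle Q P ∧ stdIP Q = s then h.choose
  else ∅

/-- The concatenation of single blocks of the sizes listed in `l`. -/
noncomputable def concatList (l : List ℕ) : Set (Set ℕ) :=
  l.foldl (fun acc m => concatIP acc {Set.Icc 1 m}) ∅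

/-- A permutation of `{1,…,n}`, encoded as a function on `ℕ` fixing everything else. -/
def IsPermOf (n : ℕ) (σ : ℕ → ℕ) : Prop :=
  Set.BijOn σ (Set.Icc 1 n) (Set.Icc 1 n) ∧ ∀ x : ℕ, x ∉ Set.Icc 1 n → σ x = x

open Classical in
/-- The `i`-th smallest element of `A` (junk value otherwise). -/
noncomputable def nthElt (A : Set ℕ) (i : ℕ) : ℕ :=
  if h : ∃ x ∈ A, stdMap A x = i then h.choose else 0

/-- Standardization `st(Λ|_A)` of `Λ` restricted to `A`: the permutation of `{1,…,|A|}`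
recording the relative order of the values of `Λ` on `A`. -/
noncomputable def stdRestrict (lam : ℕ → ℕ) (A : Set ℕ) : ℕ → ℕ := fun i =>
  if 1 ≤ i ∧ i ≤ A.ncard then {b ∈ A | lam b ≤ lam (nthElt A i)}.ncard else i

/-- Concatenation `σ ⊡ τ` of permutations of `{1,…,m}` and `{1,…,n}`. -/
def permConcat (m n : ℕ) (σ τ : ℕ → ℕ) : ℕ → ℕ := fun i =>
  if 1 ≤ i ∧ i ≤ m then σ i
  else if m + 1 ≤ i ∧ i ≤ m + n then τ (i - m) + m
  else i

/-- A vincular pattern: a standardized interval partition of `{1,…,n}`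
together with a permutation of `{1,…,n}`. -/
def IsVincular (p : Set (Set ℕ) × (ℕ → ℕ)) : Prop :=
  ∃ n : ℕ, IsIntervalPartitionOf p.1 (Set.Icc 1 n) ∧ IsPermOf n p.2

/-- Concatenation of vincular patterns. -/
noncomputable def vincConcat (p q : Set (Set ℕ) × (ℕ → ℕ)) : Set (Set ℕ) × (ℕ → ℕ) :=
  (concatIP p.1 q.1, permConcat (⋃₀ p.1).ncard (⋃₀ q.1).ncard p.2 q.2)

/-- Vincular section coefficient `C((𝔰,σ),(𝔱,τ);(𝔤,γ))`. -/
noncomputable def vincCoeff (p q r : Set (Set ℕ) × (ℕ → ℕ)) : ℕ :=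
  {AB : Set ℕ × Set ℕ | AB.1 ∪ AB.2 = ⋃₀ r.1 ∧
      (∃ I I' : Set (Set ℕ), IsIntervalPartitionOf I AB.1 ∧ IsIntervalPartitionOf I' AB.2 ∧
        stdIP I = p.1 ∧ stdIP I' = q.1 ∧ glue I I' = r.1) ∧
      stdRestrict r.2 AB.1 = p.2 ∧ stdRestrict r.2 AB.2 = q.2}.ncard

/-- Vincular signature pairing `⟨GPC(𝔏,Λ), (𝔰,σ)⟩`. -/
noncomputable def GPC (L : Set (Set ℕ)) (lam : ℕ → ℕ) (p : Set (Set ℕ) × (ℕ → ℕ)) : ℕ :=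
  {A : Set ℕ | A ⊆ ⋃₀ L ∧ IPle p.1 (stdIP (restrictIP L A)) ∧ stdRestrict lam A = p.2}.ncard

/-- The equivalence relation on points generated by lying in a common member of `S`; a point
outside `⋃₀ S` is related to itself only. -/
def ptRel (S : Set (Set ℕ)) : ℕ → ℕ → Prop :=
  Relation.EqvGen fun x y => ∃ X ∈ S, x ∈ X ∧ y ∈ X

/-- The connected components of the family `S`: the classes of `ptRel S` of points of `⋃₀ S`. -/
def comp (S : Set (Set ℕ)) : Set (Set ℕ) :=
  (fun x => {y | ptRel S x y}) '' ⋃₀ S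

theorem ptRel_mem_iff {S : Set (Set ℕ)} {x y : ℕ} (h : ptRel S x y) :
    x ∈ ⋃₀ S ↔ y ∈ ⋃₀ S := by
  induction h with
  | rel x y h =>
    obtain ⟨X, hX, hx, hy⟩ := h
    exact ⟨fun _ => ⟨X, hX, hy⟩, fun _ => ⟨X, hX, hx⟩⟩
  | refl x => exact Iff.rfl
  | symm x y _ ih => exact ih.symm
  | trans x y z _ _ ih1 ih2 => exact ih1.trans ih2

/-- The alternative `T = X` is there because `glueRel S` is reflexive on all sets, including those
outside `S`. -/
theorem ptRel_of_glueRel {S : Set (Set ℕ)} (hS : ∀ B ∈ S, B.Nonempty) {T X : Set ℕ}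
    (h : glueRel S T X) :
    T = X ∨ (T ∈ S ∧ X ∈ S ∧ ∀ x ∈ T, ∀ y ∈ X, ptRel S x y) := by
  induction h with
  | rel T X h =>
    obtain ⟨hT, hX, z, hzT, hzX⟩ := h
    exact Or.inr ⟨hT, hX, fun x hx y hy =>
      .trans _ z _ (.rel _ _ ⟨T, hT, hx, hzT⟩) (.rel _ _ ⟨X, hX, hzX, hy⟩)⟩
  | refl T => exact Or.inl rfl
  | symm T X _ ih =>
    rcases ih with rfl | ⟨hT, hX, ih⟩
    · exact Or.inl rfl
    · exact Or.inr ⟨hX, hT, fun x hx y hy => .symm _ _ (ih y hy x hx)⟩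
  | trans T Y X _ _ ih1 ih2 =>
    rcases ih1 with rfl | ⟨hT, hY, ih1⟩
    · exact ih2
    · rcases ih2 with rfl | ⟨_, hX, ih2⟩
      · exact Or.inr ⟨hT, hY, ih1⟩
      · obtain ⟨z, hz⟩ := hS Y hY
        exact Or.inr ⟨hT, hX, fun x hx y hy => .trans _ z _ (ih1 x hx z hz) (ih2 z hz y hy)⟩

theorem glueRel_of_ptRel {S : Set (Set ℕ)} {x y : ℕ} (h : ptRel S x y) :
    ∀ T ∈ S, ∀ X ∈ S, x ∈ T → y ∈ X → glueRel S T X := by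
  induction h with
  | rel x y h =>
    obtain ⟨Z, hZ, hx, hy⟩ := h
    intro T hT X hX hxT hyX
    exact .trans _ Z _ (.rel _ _ ⟨hT, hZ, x, hxT, hx⟩) (.rel _ _ ⟨hZ, hX, y, hy, hyX⟩)
  | refl x => exact fun T hT X hX hxT hxX => .rel _ _ ⟨hT, hX, x, hxT, hxX⟩
  | symm x y _ ih => exact fun T hT X hX hT' hX' => .symm _ _ (ih X hX T hT hX' hT')
  | trans x y z h1 _ ih1 ih2 =>
    intro T hT X hX hxT hzX
    obtain ⟨Y, hY, hyY⟩ := (ptRel_mem_iff h1).1 ⟨T, hT, hxT⟩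
    exact .trans _ Y _ (ih1 T hT Y hY hxT hyY) (ih2 Y hY X hX hyY hzX)

theorem glue_class_eq {S : Set (Set ℕ)} (hS : ∀ B ∈ S, B.Nonempty) {T : Set ℕ} (hT : T ∈ S)
    {x : ℕ} (hx : x ∈ T) : ⋃₀ {X ∈ S | glueRel S T X} = {y | ptRel S x y} := by
  ext y
  constructor
  · rintro ⟨X, ⟨hX, h⟩, hy⟩
    rcases ptRel_of_glueRel hS h with rfl | ⟨_, _, h⟩
    · exact .rel _ _ ⟨T, hT, hx, hy⟩
    · exact h x hx y hy
  · intro h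
    obtain ⟨X, hX, hy⟩ := (ptRel_mem_iff h).1 ⟨T, hT, hx⟩
    exact ⟨X, ⟨hX, glueRel_of_ptRel h T hT X hX hx hy⟩, hy⟩

theorem glue_eq_comp {P Q : Set (Set ℕ)} (hP : ∀ B ∈ P, B.Nonempty) (hQ : ∀ B ∈ Q, B.Nonempty) :
    glue P Q = comp (P ∪ Q) := by
  have hS : ∀ B ∈ P ∪ Q, B.Nonempty := fun B hB => hB.elim (hP B) (hQ B)
  ext C
  constructor
  · rintro ⟨T, hT, rfl⟩
    obtain ⟨x, hx⟩ := hS T hT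
    exact ⟨x, ⟨T, hT, hx⟩, (glue_class_eq hS hT hx).symm⟩
  · rintro ⟨x, ⟨T, hT, hx⟩, rfl⟩
    exact ⟨T, hT, glue_class_eq hS hT hx⟩

theorem comp_nonempty {S : Set (Set ℕ)} : ∀ B ∈ comp S, B.Nonempty := by
  rintro _ ⟨x, _, rfl⟩
  exact ⟨x, .refl x⟩

theorem sUnion_comp (S : Set (Set ℕ)) : ⋃₀ comp S = ⋃₀ S := by
  ext y
  constructor
  · rintro ⟨_, ⟨x, hx, rfl⟩, hy⟩
    exact (ptRel_mem_iff hy).1 hx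
  · exact fun hy => ⟨_, ⟨y, hy, rfl⟩, .refl y⟩

theorem ptRel_mono {S T : Set (Set ℕ)} (h : S ⊆ T) {x y : ℕ} (hxy : ptRel S x y) :
    ptRel T x y :=
  Relation.EqvGen.mono (fun _ _ ⟨X, hX, hh⟩ => ⟨X, h hX, hh⟩) _ _ hxy

theorem ptRel_comp_union (S T : Set (Set ℕ)) (x y : ℕ) :
    ptRel (comp S ∪ T) x y ↔ ptRel (S ∪ T) x y := by
  constructor
  · intro h
    induction h with
    | rel x y h =>
      obtain ⟨X, ⟨z, _, rfl⟩ | hX, hx, hy⟩ := h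
      · exact ptRel_mono subset_union_left (.trans _ z _ (.symm _ _ hx) hy)
      · exact .rel _ _ ⟨X, Or.inr hX, hx, hy⟩
    | refl x => exact .refl x
    | symm x y _ ih => exact .symm _ _ ih
    | trans x y z _ _ ih1 ih2 => exact .trans _ _ _ ih1 ih2
  · refine Relation.EqvGen.mono ?_ x y
    rintro x y ⟨X, hX | hX, hx, hy⟩
    · exact ⟨_, Or.inl ⟨x, ⟨X, hX, hx⟩, rfl⟩, .refl x, .rel _ _ ⟨X, hX, hx, hy⟩⟩
    · exact ⟨X, Or.inr hX, hx, hy⟩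

theorem comp_comp_union (S T : Set (Set ℕ)) : comp (comp S ∪ T) = comp (S ∪ T) := by
  have h : ptRel (comp S ∪ T) = ptRel (S ∪ T) := by
    ext x y
    exact ptRel_comp_union S T x y
  have h' : ⋃₀ (comp S ∪ T) = ⋃₀ (S ∪ T) := by
    rw [sUnion_union, sUnion_union, sUnion_comp]
  rw [comp.eq_1 (comp S ∪ T), h, h', ← comp]

/-- Gluing of interval partitions is associative. -/
theorem gluing_assoc (I I' I'' : Set (Set ℕ))
    (hI : IsIntervalPartition I) (hI' : IsIntervalPartition I')
    (hI'' : IsIntervalPartition I'') :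
    glue (glue I I') I'' = glue I (glue I' I'') := by
  have h1 : ∀ B ∈ I, B.Nonempty := fun B hB => (hI.2.1 B hB).1
  have h2 : ∀ B ∈ I', B.Nonempty := fun B hB => (hI'.2.1 B hB).1
  have h3 : ∀ B ∈ I'', B.Nonempty := fun B hB => (hI''.2.1 B hB).1
  rw [glue_eq_comp h1 h2, glue_eq_comp h2 h3, glue_eq_comp comp_nonempty h3,
    glue_eq_comp h1 comp_nonempty, comp_comp_union, union_comm I (comp _), comp_comp_union,
    union_comm (I' ∪ I'') I, union_assoc]
end

section
/- Let 𝓦, 𝓩 be interval partitions of finite subsets of ℕ≥1 with std(𝓦) = std(𝓩). Then the set of pairs (std(𝓘), std(𝓘')) arising from decompositions 𝓘 ⋎ 𝓘' = 𝓦 with 𝓘 ∈ IP(A), 𝓘' ∈ IP(A') for some cover A ∪ A' = ⋃𝓦 equals the set of pairs (std(𝓙), std(𝓙')) arising from decompositions 𝓙 ⋎ 𝓙' = 𝓩 with 𝓙 ∈ IP(B), 𝓙' ∈ IP(B') for some cover B ∪ B' = ⋃𝓩. -/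
/-!
Two interval partitions with the same standardization differ only by an order isomorphism of their
ground sets: composing the standardization map of `W` with the inverse of that of `Z` gives `φ`,
strictly increasing on `⋃₀ W`, which carries the blocks of `W` exactly onto the blocks of `Z`
(`exists_transport`). Transporting a decomposition `I ⋎ I' = W` blockwise along `φ` gives a
decomposition of `Z` with the same pair of standardizations:

* standardization only sees the relative order of the ground set (`stdIP_mapBlocks`);
* gluing only sees which blocks intersect, hence commutes with maps injective on the ground set
  (`glue_mapBlocks`);
* every block of `I` lies inside a block of `W`, and `φ` sends blocks of `W` to intervals, so the
  transported blocks are again intervals (`isIntervalPartition_mapBlocks`). This is the only point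
  where order-preservation alone would not suffice, since `φ` may close or open gaps between blocks.

This proves one inclusion, and the situation is symmetric in `W` and `Z`.
-/

open Set

/-- The set of pairs `(std 𝓘, std 𝓘')` arising from gluing decompositions of `W`
along covers of its ground set. -/
noncomputable def decompPairs (W : Set (Set ℕ)) : Set (Set (Set ℕ) × Set (Set ℕ)) :=
  {p | ∃ A A' : Set ℕ, A ∪ A' = ⋃₀ W ∧
    ∃ I I' : Set (Set ℕ), IsIntervalPartitionOf I A ∧ IsIntervalPartitionOf I' A' ∧
      glue I I' = W ∧ p = (stdIP I, stdIP I')}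

/-- The family of images of the blocks of `P` under `φ`. -/
def mapBlocks (φ : ℕ → ℕ) (P : Set (Set ℕ)) : Set (Set ℕ) := (fun B => φ '' B) '' P

theorem sUnion_mapBlocks (φ : ℕ → ℕ) (P : Set (Set ℕ)) : ⋃₀ mapBlocks φ P = φ '' ⋃₀ P := by
  rw [mapBlocks, sUnion_image, image_sUnion, sUnion_image]

theorem stdMap_strictMonoOn {S : Set ℕ} (hS : S.Finite) : StrictMonoOn (stdMap S) S := by
  intro x _ y hy hxy
  refine ncard_lt_ncard ?_ (hS.subset (sep_subset _ _))
  refine ⟨fun z hz => ⟨hz.1, hz.2.trans hxy.le⟩, fun hsub => ?_⟩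
  exact absurd (hsub ⟨hy, le_rfl⟩).2 (not_le.mpr hxy)

theorem stdMap_image {φ : ℕ → ℕ} {S : Set ℕ} (hφ : StrictMonoOn φ S) {x : ℕ} (hx : x ∈ S) :
    stdMap (φ '' S) (φ x) = stdMap S x := by
  have himg : {y ∈ φ '' S | y ≤ φ x} = φ '' {y ∈ S | y ≤ x} := by
    ext y
    constructor
    · rintro ⟨⟨z, hz, rfl⟩, hle⟩
      exact ⟨z, ⟨hz, (hφ.le_iff_le hz hx).1 hle⟩, rfl⟩
    · rintro ⟨z, ⟨hz, hle⟩, rfl⟩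
      exact ⟨⟨z, hz, rfl⟩, (hφ.le_iff_le hz hx).2 hle⟩
  rw [stdMap, himg, stdMap, (hφ.injOn.mono (sep_subset _ _)).ncard_image]

theorem stdIP_mapBlocks {φ : ℕ → ℕ} {P : Set (Set ℕ)} (hφ : StrictMonoOn φ (⋃₀ P)) :
    stdIP (mapBlocks φ P) = stdIP P := by
  rw [stdIP, sUnion_mapBlocks, mapBlocks, image_image, stdIP]
  refine image_congr fun B hB => ?_
  rw [image_image]
  exact image_congr fun x hx => stdMap_image hφ (subset_sUnion_of_mem hB hx)

theorem glueRel_mapBlocks (φ : ℕ → ℕ) {S : Set (Set ℕ)} {X Y : Set ℕ} (h : glueRel S X Y) :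
    glueRel (mapBlocks φ S) (φ '' X) (φ '' Y) := by
  induction h with
  | rel X Y h =>
    obtain ⟨hX, hY, z, hzX, hzY⟩ := h
    exact .rel _ _ ⟨mem_image_of_mem _ hX, mem_image_of_mem _ hY, φ z,
      mem_image_of_mem _ hzX, mem_image_of_mem _ hzY⟩
  | refl X => exact .refl _
  | symm X Y _ ih => exact .symm _ _ ih
  | trans X Y Z _ _ ih₁ ih₂ => exact .trans _ _ _ ih₁ ih₂

/-- The nontrivial direction follows from `glueRel_mapBlocks` applied to an inverse of `φ`. -/
theorem glueRel_mapBlocks_iff {φ : ℕ → ℕ} {S : Set (Set ℕ)} (hφ : InjOn φ (⋃₀ S))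
    {X Y : Set ℕ} (hX : X ∈ S) (hY : Y ∈ S) :
    glueRel (mapBlocks φ S) (φ '' X) (φ '' Y) ↔ glueRel S X Y := by
  refine ⟨fun h => ?_, glueRel_mapBlocks φ⟩
  have hinv : ∀ B ∈ S, Function.invFunOn φ (⋃₀ S) '' (φ '' B) = B := fun B hB =>
    (hφ.leftInvOn_invFunOn.mono (subset_sUnion_of_mem hB)).image_image
  have hS : mapBlocks (Function.invFunOn φ (⋃₀ S)) (mapBlocks φ S) = S := by
    rw [mapBlocks, mapBlocks, image_image]
    exact (image_congr hinv).trans (image_id' S)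
  have key := glueRel_mapBlocks (Function.invFunOn φ (⋃₀ S)) h
  rwa [hS, hinv X hX, hinv Y hY] at key

theorem glue_mapBlocks {φ : ℕ → ℕ} {P Q : Set (Set ℕ)} (hφ : InjOn φ (⋃₀ (P ∪ Q))) :
    glue (mapBlocks φ P) (mapBlocks φ Q) = mapBlocks φ (glue P Q) := by
  have hPQ : mapBlocks φ P ∪ mapBlocks φ Q = mapBlocks φ (P ∪ Q) := (image_union _ _ _).symm
  rw [glue, hPQ, glue]
  nth_rewrite 3 [mapBlocks]
  nth_rewrite 3 [mapBlocks]
  rw [image_image, image_image]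
  refine image_congr fun T hT => ?_
  rw [← sUnion_mapBlocks]
  congr 1
  ext Y
  constructor
  · rintro ⟨⟨X, hX, rfl⟩, hrel⟩
    exact ⟨X, ⟨hX, (glueRel_mapBlocks_iff hφ hT hX).1 hrel⟩, rfl⟩
  · rintro ⟨X, ⟨hX, hrel⟩, rfl⟩
    exact ⟨⟨X, hX, rfl⟩, glueRel_mapBlocks φ hrel⟩

theorem subset_block_of_mem_glue {P Q : Set (Set ℕ)} {X : Set ℕ} (hX : X ∈ P ∪ Q) :
    ∃ B ∈ glue P Q, X ⊆ B :=
  ⟨_, mem_image_of_mem _ hX, subset_sUnion_of_mem ⟨hX, .refl _⟩⟩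

/-- If `φ` sends blocks of `W` to intervals, it sends any interval partition whose blocks lie inside
blocks of `W` to an interval partition. -/
theorem isIntervalPartition_mapBlocks {φ : ℕ → ℕ} {W I : Set (Set ℕ)}
    (hφ : StrictMonoOn φ (⋃₀ W)) (hblock : ∀ B ∈ W, IsIntervalBlock (φ '' B))
    (hI : IsIntervalPartition I) (hsub : ∀ X ∈ I, ∃ B ∈ W, X ⊆ B) :
    IsIntervalPartition (mapBlocks φ I) := by
  refine ⟨?_, ?_, ?_⟩
  · rw [sUnion_mapBlocks]
    exact hI.1.image φ
  · rintro _ ⟨X, hX, rfl⟩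
    obtain ⟨B, hB, hXB⟩ := hsub X hX
    obtain ⟨hne, -, hconv⟩ := hI.2.1 X hX
    obtain ⟨-, hpos, hconvB⟩ := hblock B hB
    have hBW : B ⊆ ⋃₀ W := subset_sUnion_of_mem hB
    refine ⟨hne.image φ, fun y hy => hpos y (image_mono hXB hy), ?_⟩
    rintro _ ⟨x, hx, rfl⟩ _ ⟨z, hz, rfl⟩ y hxy hyz
    obtain ⟨w, hw, rfl⟩ := hconvB _ (mem_image_of_mem φ (hXB hx)) _
      (mem_image_of_mem φ (hXB hz)) y hxy hyz
    exact mem_image_of_mem φ (hconv x hx z hz w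
      ((hφ.le_iff_le (hBW (hXB hx)) (hBW hw)).1 hxy)
      ((hφ.le_iff_le (hBW hw) (hBW (hXB hz))).1 hyz))
  · rintro _ ⟨X, hX, rfl⟩ _ ⟨Y, hY, rfl⟩ hne
    obtain ⟨B, hB, hXB⟩ := hsub X hX
    obtain ⟨C, hC, hYC⟩ := hsub Y hY
    have hXY : X ∩ Y = ∅ := hI.2.2 X hX Y hY fun h => hne (h ▸ rfl)
    have himg : φ '' X ∩ φ '' Y = φ '' (X ∩ Y) :=
      (hφ.injOn.image_inter (hXB.trans (subset_sUnion_of_mem hB))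
        (hYC.trans (subset_sUnion_of_mem hC))).symm
    rw [himg, hXY, image_empty]

/-- Interval partitions with equal standardizations are related by a map that is strictly
increasing on the ground set and matches up the blocks. -/
theorem exists_transport {W Z : Set (Set ℕ)} (hW : (⋃₀ W).Finite) (hZ : (⋃₀ Z).Finite)
    (h : stdIP W = stdIP Z) :
    ∃ φ : ℕ → ℕ, StrictMonoOn φ (⋃₀ W) ∧ mapBlocks φ W = Z := by
  have hground : stdMap (⋃₀ W) '' ⋃₀ W = stdMap (⋃₀ Z) '' ⋃₀ Z := by
    rw [← sUnion_mapBlocks, ← sUnion_mapBlocks]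
    exact congrArg sUnion h
  have hex : ∀ x, ∃ z, x ∈ ⋃₀ W → z ∈ ⋃₀ Z ∧ stdMap (⋃₀ Z) z = stdMap (⋃₀ W) x := by
    intro x
    by_cases hx : x ∈ ⋃₀ W
    · obtain ⟨z, hz, hzx⟩ := hground ▸ mem_image_of_mem (stdMap (⋃₀ W)) hx
      exact ⟨z, fun _ => ⟨hz, hzx⟩⟩
    · exact ⟨0, fun h => absurd h hx⟩
  choose φ hφ using hex
  have hmW := stdMap_strictMonoOn hW
  have hmZ := stdMap_strictMonoOn hZ
  -- A block `B` of `W` and a block `C` of `Z` with the same standardized image satisfy `φ '' B = C`.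
  have hmatch : ∀ B ∈ W, ∀ C ∈ Z, stdMap (⋃₀ W) '' B = stdMap (⋃₀ Z) '' C → φ '' B = C := by
    intro B hB C hC hBC
    have hBW : B ⊆ ⋃₀ W := subset_sUnion_of_mem hB
    have hφB : φ '' B ⊆ ⋃₀ Z := by
      rintro _ ⟨x, hx, rfl⟩
      exact (hφ x (hBW hx)).1
    refine (hmZ.injOn.image_eq_image_iff hφB (subset_sUnion_of_mem hC)).1 ?_
    rw [image_image, ← hBC]
    exact image_congr fun x hx => (hφ x (hBW hx)).2
  refine ⟨φ, fun x hx y hy hxy => ?_, ?_⟩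
  · rw [← hmZ.lt_iff_lt (hφ x hx).1 (hφ y hy).1, (hφ x hx).2, (hφ y hy).2]
    exact hmW hx hy hxy
  · ext C
    constructor
    · rintro ⟨B, hB, rfl⟩
      have hmem : stdMap (⋃₀ W) '' B ∈ stdIP Z := h ▸ ⟨B, hB, rfl⟩
      obtain ⟨C, hC, hCB⟩ := hmem
      change φ '' B ∈ Z
      rwa [hmatch B hB C hC hCB.symm]
    · intro hC
      have hmem : stdMap (⋃₀ Z) '' C ∈ stdIP W := h ▸ ⟨C, hC, rfl⟩
      obtain ⟨B, hB, hBC⟩ := hmem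
      exact ⟨B, hB, hmatch B hB C hC hBC⟩

theorem decompPairs_subset {W Z : Set (Set ℕ)}
    (hW : IsIntervalPartition W) (hZ : IsIntervalPartition Z) (h : stdIP W = stdIP Z) :
    decompPairs W ⊆ decompPairs Z := by
  obtain ⟨φ, hmono, rfl⟩ := exists_transport hW.1 hZ.1 h
  rintro _ ⟨A, A', hA, I, I', ⟨hI, rfl⟩, ⟨hI', rfl⟩, hglue, rfl⟩
  have hblock : ∀ B ∈ W, IsIntervalBlock (φ '' B) := fun B hB =>
    hZ.2.1 _ (mem_image_of_mem _ hB)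
  have hsub : ∀ X ∈ I ∪ I', ∃ B ∈ W, X ⊆ B := fun X hX => by
    simpa only [hglue] using subset_block_of_mem_glue hX
  refine ⟨φ '' ⋃₀ I, φ '' ⋃₀ I', ?_, mapBlocks φ I, mapBlocks φ I', ⟨?_, sUnion_mapBlocks _ _⟩,
    ⟨?_, sUnion_mapBlocks _ _⟩, ?_, ?_⟩
  · rw [← image_union, hA, sUnion_mapBlocks]
  · exact isIntervalPartition_mapBlocks hmono hblock hI fun X hX => hsub X (.inl hX)
  · exact isIntervalPartition_mapBlocks hmono hblock hI' fun X hX => hsub X (.inr hX)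
  · rw [glue_mapBlocks, hglue]
    rw [sUnion_union, hA]
    exact hmono.injOn
  · rw [stdIP_mapBlocks (hmono.mono (hA ▸ subset_union_left)),
      stdIP_mapBlocks (hmono.mono (hA ▸ subset_union_right))]

/-- interval partitions with equal standardizations have the same
set of standardized decomposition pairs. -/
theorem decompPairs_eq_of_stdIP_eq (W Z : Set (Set ℕ))
    (hW : IsIntervalPartition W) (hZ : IsIntervalPartition Z)
    (h : stdIP W = stdIP Z) :
    decompPairs W = decompPairs Z := by
  exact (decompPairs_subset hW hZ h).antisymm (decompPairs_subset hZ hW h.symm)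
end

section
/- The quasi-shuffle coproduct on standardized interval partitions is multiplicative with respect to concatenation: for all 𝔰, 𝔱, 𝔞, 𝔟 ∈ IPs, c(𝔞, 𝔟; 𝔰 • 𝔱) = Σ c(𝔞₁, 𝔟₁; 𝔰)·c(𝔞₂, 𝔟₂; 𝔱), the sum running over all factorizations 𝔞 = 𝔞₁ • 𝔞₂ and 𝔟 = 𝔟₁ • 𝔟₂ in IPs (allowing empty factors). -/
/-!
Let `n` be the size of the ground set of `s`. If `glue I I' = s • t`, every block of `I` and `I'` lies
inside a block of `s • t`, so none of them straddles the cut between `n` and `n + 1`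
(`block_low_or_high`). Hence `I` and `I'` split at `n` (`exists_split`) as `P ∪ shiftIP n Q` and
`P' ∪ shiftIP n Q'`. Blocks on different sides of the cut never meet, so
`glue I I' = glue P P' ∪ shiftIP n (glue Q Q')` (`glue_join`), and comparing both sides of the cut
gives `glue P P' = s` and `glue Q Q' = t`. Standardization is compatible with the cut:
`stdIP I = stdIP P • stdIP Q` (`stdIP_join`). All of this is reversible.

The pairs counted by `c(a, b; s • t)` are therefore the images, under the injective reassembling map
`joinPair n`, of the products of the sets counted by `c(a₁, b₁; s)` and `c(a₂, b₂; t)`, over all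
factorizations (`secSet_concat`). These images are disjoint: a pair of ground sets determines the
sizes of `a₁` and `b₁`, and these sizes determine the factorizations (`factorSet_ext`). The same
fact shows that there are only finitely many factorizations.
-/

open Set

/-! ### Families of blocks cut at `n` -/

/-- The set counted by `secCoeff a b g`. -/
def secSet (a b g : Set (Set ℕ)) : Set (Set ℕ × Set ℕ) :=
  {p : Set ℕ × Set ℕ | p.1 ∪ p.2 = ⋃₀ g ∧
      ∃ I J : Set (Set ℕ), IsIntervalPartitionOf I p.1 ∧ IsIntervalPartitionOf J p.2 ∧
        stdIP I = a ∧ stdIP J = b ∧ glue I J = g}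

/-- All blocks are nonempty and contained in `{0, …, n}`. -/
def LowBlocks (n : ℕ) (P : Set (Set ℕ)) : Prop :=
  ∀ B ∈ P, B.Nonempty ∧ ∀ x ∈ B, x ≤ n

/-- All blocks are nonempty and consist of positive integers. With `LowBlocks n P` and
`PosBlocks Q`, the families `P` and `shiftIP n Q` live on the two sides of the cut at `n`. -/
def PosBlocks (P : Set (Set ℕ)) : Prop :=
  ∀ B ∈ P, B.Nonempty ∧ ∀ x ∈ B, 1 ≤ x

lemma shift_injective (n : ℕ) : Function.Injective (fun x : ℕ => x + n) :=
  fun _ _ h => Nat.add_right_cancel h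

lemma sUnion_shiftIP (n : ℕ) (P : Set (Set ℕ)) :
    ⋃₀ shiftIP n P = (fun x => x + n) '' ⋃₀ P := by
  ext x
  simp only [shiftIP, mem_sUnion, mem_image]
  constructor
  · rintro ⟨_, ⟨B, hB, rfl⟩, y, hy, rfl⟩
    exact ⟨y, ⟨B, hB, hy⟩, rfl⟩
  · rintro ⟨y, ⟨B, hB, hy⟩, rfl⟩
    exact ⟨_, ⟨B, hB, rfl⟩, y, hy, rfl⟩

lemma shiftIP_union (n : ℕ) (P Q : Set (Set ℕ)) :
    shiftIP n (P ∪ Q) = shiftIP n P ∪ shiftIP n Q := image_union _ _ _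

lemma join_cancel_left {n : ℕ} {U V U' V' : Set (Set ℕ)} (hU : LowBlocks n U)
    (hV' : PosBlocks V') (h : U ∪ shiftIP n V = U' ∪ shiftIP n V') : U ⊆ U' := by
  intro B hB
  have : B ∈ U' ∪ shiftIP n V' := h ▸ Or.inl hB
  rcases this with h1 | ⟨C, hC, rfl⟩
  · exact h1
  · obtain ⟨⟨x, hx⟩, hp⟩ := hV' C hC
    have h1 := (hU _ hB).2 _ ⟨x, hx, rfl⟩
    have h2 := hp x hx
    simp only at h1
    omega

lemma join_cancel_right {n : ℕ} {U V U' V' : Set (Set ℕ)} (hU' : LowBlocks n U')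
    (hV : PosBlocks V) (h : U ∪ shiftIP n V = U' ∪ shiftIP n V') : V ⊆ V' := by
  intro B hB
  have : (fun x => x + n) '' B ∈ U' ∪ shiftIP n V' := h ▸ Or.inr ⟨B, hB, rfl⟩
  rcases this with h1 | ⟨C, hC, hCB⟩
  · obtain ⟨⟨x, hx⟩, hp⟩ := hV B hB
    have h1 := (hU' _ h1).2 _ ⟨x, hx, rfl⟩
    have h2 := hp x hx
    simp only at h1
    omega
  · exact (image_injective.2 (shift_injective n) hCB) ▸ hC

/-- A family cut at `n` determines its low part and its shifted high part. -/
lemma join_cancel {n : ℕ} {U V U' V' : Set (Set ℕ)} (hU : LowBlocks n U) (hU' : LowBlocks n U')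
    (hV : PosBlocks V) (hV' : PosBlocks V')
    (h : U ∪ shiftIP n V = U' ∪ shiftIP n V') : U = U' ∧ V = V' :=
  ⟨(join_cancel_left hU hV' h).antisymm (join_cancel_left hU' hV h.symm),
    (join_cancel_right hU' hV h).antisymm (join_cancel_right hU hV' h.symm)⟩

lemma join_ground_cancel {n : ℕ} {A B A' B' : Set ℕ} (hA : ∀ x ∈ A, x ≤ n) (hA' : ∀ x ∈ A', x ≤ n)
    (hB : ∀ x ∈ B, 1 ≤ x) (hB' : ∀ x ∈ B', 1 ≤ x)
    (h : A ∪ (fun x => x + n) '' B = A' ∪ (fun x => x + n) '' B') : A = A' ∧ B = B' := by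
  have key : ∀ x, (x ∈ A ∨ ∃ y ∈ B, y + n = x) ↔ (x ∈ A' ∨ ∃ y ∈ B', y + n = x) := by
    intro x
    exact Set.ext_iff.1 h x
  constructor
  · ext x
    have := key x
    constructor
    · intro hx
      rcases this.1 (Or.inl hx) with h1 | ⟨y, hy, rfl⟩
      · exact h1
      · have := hA _ hx; have := hB' _ hy; omega
    · intro hx
      rcases this.2 (Or.inl hx) with h1 | ⟨y, hy, rfl⟩
      · exact h1
      · have := hA' _ hx; have := hB _ hy; omega
  · ext x
    have := key (x + n)
    constructor
    · intro hx
      rcases this.1 (Or.inr ⟨x, hx, rfl⟩) with h1 | ⟨y, hy, hyx⟩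
      · have := hA' _ h1; have := hB _ hx; omega
      · obtain rfl : y = x := by omega
        exact hy
    · intro hx
      rcases this.2 (Or.inr ⟨x, hx, rfl⟩) with h1 | ⟨y, hy, hyx⟩
      · have := hA _ h1; have := hB' _ hx; omega
      · obtain rfl : y = x := by omega
        exact hy

/-! ### Gluing -/

/-- Gluing of a single family of blocks; `glue P Q = glueOne (P ∪ Q)`. -/
def glueOne (S : Set (Set ℕ)) : Set (Set ℕ) :=
  image (fun T => ⋃₀ {X ∈ S | glueRel S T X}) S

/-- If no member of `U` meets a member of `V`, then no chain of intersecting blocks leaves `U`. -/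
lemma glueRel_union {U V : Set (Set ℕ)} (h : ∀ X ∈ U, ∀ Y ∈ V, ¬ (X ∩ Y).Nonempty)
    {T X : Set ℕ} (hr : glueRel (U ∪ V) T X) :
    (T ∈ U ↔ X ∈ U) ∧ (T ∈ U → glueRel U T X) := by
  induction hr with
  | rel T X hTX =>
    obtain ⟨hT, hX, hn⟩ := hTX
    have h1 : T ∈ U → X ∈ U := fun hTU => hX.resolve_right fun hXV => h T hTU X hXV hn
    have h2 : X ∈ U → T ∈ U := fun hXU => hT.resolve_right fun hTV =>
      h X hXU T hTV (by rwa [inter_comm])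
    exact ⟨⟨h1, h2⟩, fun hTU => .rel _ _ ⟨hTU, h1 hTU, hn⟩⟩
  | refl T => exact ⟨Iff.rfl, fun _ => .refl _⟩
  | symm T X _ ih => exact ⟨ih.1.symm, fun hX => .symm _ _ (ih.2 (ih.1.2 hX))⟩
  | trans T X Y _ _ ih1 ih2 =>
    exact ⟨ih1.1.trans ih2.1, fun hT => .trans _ _ _ (ih1.2 hT) (ih2.2 (ih1.1.1 hT))⟩

lemma glue_class_union {U V : Set (Set ℕ)} (h : ∀ X ∈ U, ∀ Y ∈ V, ¬ (X ∩ Y).Nonempty)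
    {T : Set ℕ} (hT : T ∈ U) :
    {X ∈ U ∪ V | glueRel (U ∪ V) T X} = {X ∈ U | glueRel U T X} := by
  ext X
  constructor
  · rintro ⟨_, hr⟩
    have := glueRel_union h hr
    exact ⟨this.1.1 hT, this.2 hT⟩
  · rintro ⟨hX, hr⟩
    exact ⟨Or.inl hX, hr.mono fun _ _ ⟨h1, h2, h3⟩ => ⟨Or.inl h1, Or.inl h2, h3⟩⟩

lemma glueOne_union {U V : Set (Set ℕ)} (h : ∀ X ∈ U, ∀ Y ∈ V, ¬ (X ∩ Y).Nonempty) :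
    glueOne (U ∪ V) = glueOne U ∪ glueOne V := by
  have h' : ∀ X ∈ V, ∀ Y ∈ U, ¬ (X ∩ Y).Nonempty := fun X hX Y hY => by
    rw [inter_comm]; exact h Y hY X hX
  unfold glueOne
  rw [image_union]
  congr 1
  · exact image_congr fun T hT => by rw [glue_class_union h hT]
  · exact image_congr fun T hT => by rw [union_comm, glue_class_union h' hT]

lemma glueRel_shift (n : ℕ) (S : Set (Set ℕ)) (T X : Set ℕ) :
    glueRel (shiftIP n S) ((fun x => x + n) '' T) ((fun x => x + n) '' X) ↔ glueRel S T X := by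
  have key : ∀ Y Z, glueRel (shiftIP n S) Y Z →
      glueRel S ((fun x => x + n) ⁻¹' Y) ((fun x => x + n) ⁻¹' Z) := by
    intro Y Z hr
    induction hr with
    | rel Y Z h =>
      obtain ⟨⟨B, hB, rfl⟩, ⟨C, hC, rfl⟩, hn⟩ := h
      simp only [preimage_image_eq _ (shift_injective n)]
      refine .rel _ _ ⟨hB, hC, ?_⟩
      rw [← image_inter (shift_injective n)] at hn
      exact hn.of_image
    | refl => exact .refl _
    | symm _ _ _ ih => exact .symm _ _ ih
    | trans _ _ _ _ _ ih1 ih2 => exact .trans _ _ _ ih1 ih2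
  constructor
  · intro h
    simpa only [preimage_image_eq _ (shift_injective n)] using key _ _ h
  · intro hr
    induction hr with
    | rel Y Z h =>
      obtain ⟨hB, hC, hn⟩ := h
      refine .rel _ _ ⟨⟨_, hB, rfl⟩, ⟨_, hC, rfl⟩, ?_⟩
      rw [← image_inter (shift_injective n)]
      exact hn.image _
    | refl => exact .refl _
    | symm _ _ _ ih => exact .symm _ _ ih
    | trans _ _ _ _ _ ih1 ih2 => exact .trans _ _ _ ih1 ih2

lemma glueOne_shift (n : ℕ) (S : Set (Set ℕ)) :
    glueOne (shiftIP n S) = shiftIP n (glueOne S) := by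
  have : ∀ T, {X ∈ shiftIP n S | glueRel (shiftIP n S) ((fun x => x + n) '' T) X}
      = shiftIP n {X ∈ S | glueRel S T X} := by
    intro T
    ext X
    constructor
    · rintro ⟨⟨B, hB, rfl⟩, hr⟩
      exact ⟨B, ⟨hB, (glueRel_shift n S T B).1 hr⟩, rfl⟩
    · rintro ⟨B, ⟨hB, hr⟩, rfl⟩
      exact ⟨⟨B, hB, rfl⟩, (glueRel_shift n S T B).2 hr⟩
  conv_lhs => unfold glueOne
  conv_lhs => rw [shiftIP, image_image]
  unfold glueOne
  conv_rhs => rw [shiftIP, image_image]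
  refine image_congr fun T _ => ?_
  rw [← sUnion_shiftIP, ← this T]
  rfl

/-- Gluing acts separately on both sides of the cut at `n`. -/
lemma glue_join {n : ℕ} {P P' Q Q' : Set (Set ℕ)} (hP : LowBlocks n P) (hP' : LowBlocks n P')
    (hQ : PosBlocks Q) (hQ' : PosBlocks Q') :
    glue (P ∪ shiftIP n Q) (P' ∪ shiftIP n Q') = glue P P' ∪ shiftIP n (glue Q Q') := by
  change glueOne _ = glueOne _ ∪ shiftIP n (glueOne _)
  rw [union_union_union_comm, ← shiftIP_union, glueOne_union, glueOne_shift]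
  rintro X hX _ ⟨Y, hY, rfl⟩ ⟨x, hx, y, hy, rfl⟩
  have h1 : y + n ≤ n := by
    rcases hX with h | h
    exacts [(hP X h).2 _ hx, (hP' X h).2 _ hx]
  have h2 : 1 ≤ y := by
    rcases hY with h | h
    exacts [(hQ Y h).2 _ hy, (hQ' Y h).2 _ hy]
  omega

lemma subset_glue {P Q : Set (Set ℕ)} {B : Set ℕ} (hB : B ∈ P ∪ Q) : ∃ C ∈ glue P Q, B ⊆ C :=
  ⟨_, ⟨B, hB, rfl⟩, subset_sUnion_of_mem ⟨hB, .refl _⟩⟩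

/-- In particular the condition `p.1 ∪ p.2 = ⋃₀ g` in `secSet` follows from `glue I J = g`. -/
lemma sUnion_glue (P Q : Set (Set ℕ)) : ⋃₀ glue P Q = ⋃₀ P ∪ ⋃₀ Q := by
  rw [← sUnion_union]
  apply Subset.antisymm
  · rintro x ⟨_, ⟨T, _, rfl⟩, X, ⟨hX, _⟩, hx⟩
    exact ⟨X, hX, hx⟩
  · rintro x ⟨B, hB, hx⟩
    obtain ⟨C, hC, h⟩ := subset_glue hB
    exact ⟨C, hC, h hx⟩

/-- Used with `p x` being `x ≤ n` or `1 ≤ x`. -/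
lemma glue_blocks {p : ℕ → Prop} {P Q : Set (Set ℕ)} (hP : ∀ B ∈ P, B.Nonempty ∧ ∀ x ∈ B, p x)
    (hQ : ∀ B ∈ Q, B.Nonempty ∧ ∀ x ∈ B, p x) : ∀ B ∈ glue P Q, B.Nonempty ∧ ∀ x ∈ B, p x := by
  have h : ∀ B ∈ P ∪ Q, B.Nonempty ∧ ∀ x ∈ B, p x := by
    rintro B (hB | hB)
    exacts [hP B hB, hQ B hB]
  rintro _ ⟨T, hT, rfl⟩
  refine ⟨(h T hT).1.mono (subset_sUnion_of_mem ⟨hT, .refl _⟩), ?_⟩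
  rintro x ⟨X, ⟨hX, _⟩, hx⟩
  exact (h X hX).2 x hx

/-! ### Standardization -/

lemma stdMap_lt {A : Set ℕ} (hA : A.Finite) {x y : ℕ} (hy : y ∈ A) (h : x < y) :
    stdMap A x < stdMap A y := by
  refine ncard_lt_ncard ⟨fun z hz => ⟨hz.1, hz.2.trans h.le⟩, fun hss => ?_⟩
    (hA.subset (sep_subset _ _))
  have := (hss ⟨hy, le_rfl⟩ : y ∈ {z ∈ A | z ≤ x}).2
  omega

lemma stdMap_le_iff {A : Set ℕ} (hA : A.Finite) {x y : ℕ} (hx : x ∈ A) (hy : y ∈ A) :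
    stdMap A x ≤ stdMap A y ↔ x ≤ y := by
  constructor
  · intro h
    by_contra hlt
    exact absurd (stdMap_lt hA hx (not_le.1 hlt)) (not_lt.2 h)
  · intro h
    rcases h.eq_or_lt with rfl | h
    · rfl
    · exact (stdMap_lt hA hy h).le

lemma stdMap_injOn {A : Set ℕ} (hA : A.Finite) : InjOn (stdMap A) A := fun _ hx _ hy h =>
  le_antisymm ((stdMap_le_iff hA hx hy).1 h.le) ((stdMap_le_iff hA hy hx).1 h.ge)

lemma stdMap_image_s7 {A : Set ℕ} (hA : A.Finite) : stdMap A '' A = Icc 1 A.ncard := by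
  apply eq_of_subset_of_ncard_le
  · rintro _ ⟨x, hx, rfl⟩
    have hf : {y ∈ A | y ≤ x}.Finite := hA.subset (sep_subset _ _)
    exact ⟨(ncard_pos hf).2 ⟨x, hx, le_rfl⟩, ncard_le_ncard (sep_subset _ _) hA⟩
  · rw [(stdMap_injOn hA).ncard_image]
    simp [ncard_eq_toFinset_card']
  · exact finite_Icc _ _

lemma sUnion_stdIP (P : Set (Set ℕ)) : ⋃₀ stdIP P = stdMap (⋃₀ P) '' ⋃₀ P := by
  ext x
  simp only [stdIP, mem_sUnion, mem_image]
  constructor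
  · rintro ⟨_, ⟨B, hB, rfl⟩, y, hy, rfl⟩
    exact ⟨y, ⟨B, hB, hy⟩, rfl⟩
  · rintro ⟨y, ⟨B, hB, hy⟩, rfl⟩
    exact ⟨_, ⟨B, hB, rfl⟩, y, hy, rfl⟩

lemma ncard_sUnion_stdIP {P : Set (Set ℕ)} (hP : IsIntervalPartition P) :
    (⋃₀ stdIP P).ncard = (⋃₀ P).ncard := by
  rw [sUnion_stdIP, (stdMap_injOn hP.1).ncard_image]

lemma isStdIP_stdIP {P : Set (Set ℕ)} (hP : IsIntervalPartition P) : IsStdIP (stdIP P) := by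
  have hU : ⋃₀ stdIP P = Icc 1 (⋃₀ P).ncard := by rw [sUnion_stdIP, stdMap_image_s7 hP.1]
  refine ⟨⟨hU ▸ finite_Icc _ _, ?_, ?_⟩, _, hU⟩
  · rintro C hC
    have hsub : C ⊆ Icc 1 (⋃₀ P).ncard := hU ▸ subset_sUnion_of_mem hC
    obtain ⟨B, hB, rfl⟩ := hC
    refine ⟨(hP.2.1 B hB).1.image _, fun x hx => (hsub hx).1, ?_⟩
    rintro _ ⟨x, hx, rfl⟩ _ ⟨z, hz, rfl⟩ y hxy hyz
    have hy : y ∈ stdMap (⋃₀ P) '' ⋃₀ P := by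
      rw [stdMap_image_s7 hP.1]
      exact ⟨(hsub ⟨x, hx, rfl⟩).1.trans hxy, hyz.trans (hsub ⟨z, hz, rfl⟩).2⟩
    obtain ⟨w, hw, rfl⟩ := hy
    refine ⟨w, (hP.2.1 B hB).2.2 x hx z hz w ?_ ?_, rfl⟩
    · exact (stdMap_le_iff hP.1 ⟨B, hB, hx⟩ hw).1 hxy
    · exact (stdMap_le_iff hP.1 hw ⟨B, hB, hz⟩).1 hyz
  · rintro _ ⟨B, hB, rfl⟩ _ ⟨C, hC, rfl⟩ hne
    have hBC : B ≠ C := fun h => hne (by rw [h])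
    simp only
    rw [← (stdMap_injOn hP.1).image_inter (subset_sUnion_of_mem hB) (subset_sUnion_of_mem hC),
      hP.2.2 B hB C hC hBC, image_empty]

lemma stdMap_join_low {n : ℕ} {A B : Set ℕ} (hB : ∀ x ∈ B, 1 ≤ x) {x : ℕ} (hx : x ≤ n) :
    stdMap (A ∪ (fun x => x + n) '' B) x = stdMap A x := by
  unfold stdMap
  congr 1
  ext y
  constructor
  · rintro ⟨h | ⟨z, hz, rfl⟩, hy⟩
    · exact ⟨h, hy⟩
    · have := hB z hz
      simp only at hy
      omega
  · rintro ⟨h, hy⟩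
    exact ⟨Or.inl h, hy⟩

lemma stdMap_join_high {n : ℕ} {A B : Set ℕ} (hAf : A.Finite) (hBf : B.Finite)
    (hA : ∀ x ∈ A, x ≤ n) (hB : ∀ x ∈ B, 1 ≤ x) (x : ℕ) :
    stdMap (A ∪ (fun x => x + n) '' B) (x + n) = stdMap B x + A.ncard := by
  unfold stdMap
  have : {y ∈ A ∪ (fun x => x + n) '' B | y ≤ x + n}
      = (fun x => x + n) '' {y ∈ B | y ≤ x} ∪ A := by
    ext y
    constructor
    · rintro ⟨h | ⟨z, hz, rfl⟩, hy⟩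
      · exact Or.inr h
      · exact Or.inl ⟨z, ⟨hz, by simpa using hy⟩, rfl⟩
    · rintro (⟨z, ⟨hz, hzx⟩, rfl⟩ | h)
      · exact ⟨Or.inr ⟨z, hz, rfl⟩, by simpa using hzx⟩
      · exact ⟨Or.inl h, (hA y h).trans (Nat.le_add_left _ _)⟩
  rw [this, ncard_union_eq ?_ ((hBf.subset (sep_subset _ _)).image _) hAf,
    ncard_image_of_injective _ (shift_injective n)]
  rw [Set.disjoint_left]
  rintro _ ⟨z, ⟨hz, _⟩, rfl⟩ h
  have h1 : z + n ≤ n := hA _ h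
  have h2 := hB _ hz
  omega

lemma IsIntervalPartition.posBlocks {P : Set (Set ℕ)} (hP : IsIntervalPartition P) :
    PosBlocks P := fun B hB => ⟨(hP.2.1 B hB).1, (hP.2.1 B hB).2.1⟩

lemma LowBlocks.sUnion {n : ℕ} {P : Set (Set ℕ)} (h : LowBlocks n P) : ∀ x ∈ ⋃₀ P, x ≤ n :=
  fun x ⟨B, hB, hx⟩ => (h B hB).2 x hx

lemma PosBlocks.sUnion {P : Set (Set ℕ)} (h : PosBlocks P) : ∀ x ∈ ⋃₀ P, 1 ≤ x :=
  fun x ⟨B, hB, hx⟩ => (h B hB).2 x hx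

/-- Standardization turns a partition cut at `n` into a concatenation; the shift `n` is replaced by
the number of elements actually present below the cut. -/
lemma stdIP_join {n : ℕ} {P Q : Set (Set ℕ)} (hP : IsIntervalPartition P) (hPn : LowBlocks n P)
    (hQ : IsIntervalPartition Q) :
    stdIP (P ∪ shiftIP n Q) = concatIP (stdIP P) (stdIP Q) := by
  unfold concatIP
  rw [ncard_sUnion_stdIP hP]
  conv_lhs => unfold stdIP
  rw [image_union, sUnion_union, sUnion_shiftIP]
  congr 1
  · refine image_congr fun B hB => image_congr fun x hx => ?_
    exact stdMap_join_low hQ.posBlocks.sUnion ((hPn B hB).2 x hx)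
  · unfold shiftIP stdIP
    rw [image_image, image_image]
    refine image_congr fun B hB => ?_
    rw [image_image, image_image]
    exact image_congr fun x hx =>
      stdMap_join_high hP.1 hQ.1 hPn.sUnion hQ.posBlocks.sUnion x

/-! ### Joining and splitting interval partitions -/

lemma isIntervalPartition_shift {n : ℕ} {P : Set (Set ℕ)} (hP : IsIntervalPartition P) :
    IsIntervalPartition (shiftIP n P) := by
  refine ⟨sUnion_shiftIP n P ▸ hP.1.image _, ?_, ?_⟩
  · rintro _ ⟨B, hB, rfl⟩
    obtain ⟨h1, h2, h3⟩ := hP.2.1 B hB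
    refine ⟨h1.image _, ?_, ?_⟩
    · rintro _ ⟨x, hx, rfl⟩
      exact (h2 x hx).trans (Nat.le_add_right _ _)
    · rintro _ ⟨x, hx, rfl⟩ _ ⟨z, hz, rfl⟩ y hxy hyz
      simp only at hxy hyz
      exact ⟨y - n, h3 x hx z hz _ (by omega) (by omega), by simp only; omega⟩
  · rintro _ ⟨B, hB, rfl⟩ _ ⟨C, hC, rfl⟩ hne
    simp only
    rw [← image_inter (shift_injective n), hP.2.2 B hB C hC (fun h => hne (by rw [h])), image_empty]

lemma isIntervalPartition_join {n : ℕ} {P Q : Set (Set ℕ)} (hP : IsIntervalPartition P)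
    (hPn : LowBlocks n P) (hQ : IsIntervalPartition Q) :
    IsIntervalPartition (P ∪ shiftIP n Q) := by
  have hQ' := isIntervalPartition_shift (n := n) hQ
  have hd : ∀ B ∈ P, ∀ C ∈ shiftIP n Q, B ∩ C = ∅ := by
    rintro B hB _ ⟨C, hC, rfl⟩
    rw [eq_empty_iff_forall_notMem]
    rintro _ ⟨hx, y, hy, rfl⟩
    have h1 : y + n ≤ n := (hPn B hB).2 _ hx
    have h2 := (hQ.posBlocks C hC).2 _ hy
    omega
  refine ⟨sUnion_union P _ ▸ hP.1.union hQ'.1, ?_, ?_⟩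
  · rintro B (hB | hB)
    exacts [hP.2.1 B hB, hQ'.2.1 B hB]
  · rintro B (hB | hB) C (hC | hC) hne
    · exact hP.2.2 B hB C hC hne
    · exact hd B hB C hC
    · rw [inter_comm]; exact hd C hC B hB
    · exact hQ'.2.2 B hB C hC hne

/-- An interval partition none of whose blocks straddles the cut at `n` splits there. The high part
is pulled back along `x ↦ x + n`; `IsIntervalPartition Q` records that it stays positive. -/
lemma exists_split {n : ℕ} {I : Set (Set ℕ)} (hI : IsIntervalPartition I)
    (h : ∀ B ∈ I, (∀ x ∈ B, x ≤ n) ∨ ∀ x ∈ B, n < x) :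
    ∃ P Q, IsIntervalPartition P ∧ LowBlocks n P ∧ IsIntervalPartition Q ∧
      I = P ∪ shiftIP n Q := by
  have hQi : ∀ Q : Set (Set ℕ), (∀ B ∈ Q, (fun x => x + n) '' B ∈ I) →
      (∀ B ∈ Q, ∀ x ∈ B, 1 ≤ x) → IsIntervalPartition Q := by
    intro Q hQ hpos
    refine ⟨?_, ?_, ?_⟩
    · refine Finite.of_finite_image (f := fun x => x + n) (hI.1.subset ?_)
        (shift_injective n).injOn
      rintro _ ⟨x, ⟨B, hB, hx⟩, rfl⟩
      exact ⟨_, hQ B hB, x, hx, rfl⟩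
    · intro B hB
      obtain ⟨h1, h2, h3⟩ := hI.2.1 _ (hQ B hB)
      refine ⟨h1.of_image, hpos B hB, fun x hx z hz y hxy hyz => ?_⟩
      obtain ⟨w, hw, hwy⟩ := h3 _ ⟨x, hx, rfl⟩ _ ⟨z, hz, rfl⟩ (y + n)
        (by simpa using hxy) (by simpa using hyz)
      exact shift_injective n hwy ▸ hw
    · intro B hB C hC hne
      have := hI.2.2 _ (hQ B hB) _ (hQ C hC) (fun h =>
        hne (image_injective.2 (shift_injective n) h))
      rwa [← image_inter (shift_injective n), image_eq_empty] at this
  refine ⟨{B ∈ I | ∀ x ∈ B, x ≤ n}, {B | (fun x => x + n) '' B ∈ I ∧ ∀ x ∈ B, 1 ≤ x},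
    ⟨hI.1.subset (sUnion_subset_sUnion (sep_subset _ _)), fun B hB => hI.2.1 B hB.1,
      fun B hB C hC => hI.2.2 B hB.1 C hC.1⟩, fun B hB => ⟨(hI.2.1 B hB.1).1, hB.2⟩,
    hQi _ (fun B hB => hB.1) (fun B hB => hB.2), ?_⟩
  apply Subset.antisymm
  · intro B hB
    rcases h B hB with h | h
    · exact Or.inl ⟨hB, h⟩
    · have hBB : (fun x => x + n) '' ((fun x => x + n) ⁻¹' B) = B := by
        rw [image_preimage_eq_iff]
        intro x hx
        have := h x hx
        exact ⟨x - n, by simp only; omega⟩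
      refine Or.inr ⟨_, ⟨hBB.symm ▸ hB, fun x hx => ?_⟩, hBB⟩
      have h1 : n < x + n := h _ hx
      omega
  · rintro B (hB | ⟨C, hC, rfl⟩)
    exacts [hB.1, hC.1]

/-! ### Factorizations and counting -/

lemma IsStdIP.sUnion_eq {s : Set (Set ℕ)} (hs : IsStdIP s) : ⋃₀ s = Icc 1 (⋃₀ s).ncard := by
  obtain ⟨_, n, h⟩ := hs
  rw [h]
  simp [ncard_eq_toFinset_card']

lemma IsStdIP.lowBlocks {s : Set (Set ℕ)} (hs : IsStdIP s) : LowBlocks (⋃₀ s).ncard s := by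
  intro B hB
  refine ⟨(hs.1.2.1 B hB).1, fun x hx => ?_⟩
  have : x ∈ Icc 1 (⋃₀ s).ncard := hs.sUnion_eq ▸ (⟨B, hB, hx⟩ : x ∈ ⋃₀ s)
  exact this.2

lemma concatIP_cancel {a a' b b' : Set (Set ℕ)} (ha : IsStdIP a) (ha' : IsStdIP a')
    (hb : IsStdIP b) (hb' : IsStdIP b') (hn : (⋃₀ a).ncard = (⋃₀ a').ncard)
    (h : concatIP a b = concatIP a' b') : a = a' ∧ b = b' := by
  unfold concatIP at h
  rw [← hn] at h
  exact join_cancel ha.lowBlocks (hn ▸ ha'.lowBlocks) hb.1.posBlocks hb'.1.posBlocks h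

lemma ncard_le_of_concatIP {a b c : Set (Set ℕ)} (hc : IsStdIP c) (h : concatIP a b = c) :
    (⋃₀ a).ncard ≤ (⋃₀ c).ncard :=
  ncard_le_ncard (sUnion_subset_sUnion (h ▸ subset_union_left)) hc.1.1

/-- Reassembles a pair of ground sets from the pair `r.1` below the cut at `n` and the pair `r.2`
of sets to be shifted above it. -/
def joinPair (n : ℕ) (r : (Set ℕ × Set ℕ) × Set ℕ × Set ℕ) : Set ℕ × Set ℕ :=
  (r.1.1 ∪ (fun x => x + n) '' r.2.1, r.1.2 ∪ (fun x => x + n) '' r.2.2)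

lemma secSet_subset {a b g : Set (Set ℕ)} {p : Set ℕ × Set ℕ} (h : p ∈ secSet a b g) :
    p.1 ⊆ ⋃₀ g ∧ p.2 ⊆ ⋃₀ g :=
  ⟨h.1 ▸ subset_union_left, h.1 ▸ subset_union_right⟩

lemma secSet_finite {a b g : Set (Set ℕ)} (hg : IsStdIP g) : (secSet a b g).Finite :=
  (hg.1.1.powerset.prod hg.1.1.powerset).subset fun _ hp => secSet_subset hp

lemma joinPair_inj {s t : Set (Set ℕ)} (hs : IsStdIP s) (ht : IsStdIP t)
    {a₁ a₂ b₁ b₂ a₁' a₂' b₁' b₂' : Set (Set ℕ)} {r r' : (Set ℕ × Set ℕ) × Set ℕ × Set ℕ}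
    (hr : r ∈ secSet a₁ b₁ s ×ˢ secSet a₂ b₂ t) (hr' : r' ∈ secSet a₁' b₁' s ×ˢ secSet a₂' b₂' t)
    (h : joinPair (⋃₀ s).ncard r = joinPair (⋃₀ s).ncard r') : r = r' := by
  have h1 := secSet_subset hr.1
  have h2 := secSet_subset hr.2
  have h1' := secSet_subset hr'.1
  have h2' := secSet_subset hr'.2
  have hl := hs.lowBlocks.sUnion
  have hp := ht.1.posBlocks.sUnion
  have e1 := join_ground_cancel (fun x hx => hl x (h1.1 hx)) (fun x hx => hl x (h1'.1 hx))
    (fun x hx => hp x (h2.1 hx)) (fun x hx => hp x (h2'.1 hx)) (congrArg Prod.fst h)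
  have e2 := join_ground_cancel (fun x hx => hl x (h1.2 hx)) (fun x hx => hl x (h1'.2 hx))
    (fun x hx => hp x (h2.2 hx)) (fun x hx => hp x (h2'.2 hx)) (congrArg Prod.snd h)
  exact Prod.ext (Prod.ext e1.1 e2.1) (Prod.ext e1.2 e2.2)

lemma ncard_of_mem_secSet {a b g : Set (Set ℕ)} {p : Set ℕ × Set ℕ} (h : p ∈ secSet a b g) :
    (⋃₀ a).ncard = p.1.ncard ∧ (⋃₀ b).ncard = p.2.ncard := by
  obtain ⟨_, I, I', hI, hI', rfl, rfl, _⟩ := h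
  rw [ncard_sUnion_stdIP hI.1, ncard_sUnion_stdIP hI'.1, hI.2, hI'.2]
  exact ⟨rfl, rfl⟩

/-- Pairs of factorizations `a = q.1.1 • q.1.2` and `b = q.2.1 • q.2.2`. -/
def factorSet (a b : Set (Set ℕ)) :
    Set ((Set (Set ℕ) × Set (Set ℕ)) × Set (Set ℕ) × Set (Set ℕ)) :=
  {q | IsStdIP q.1.1 ∧ IsStdIP q.1.2 ∧ IsStdIP q.2.1 ∧ IsStdIP q.2.2 ∧
    concatIP q.1.1 q.1.2 = a ∧ concatIP q.2.1 q.2.2 = b}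

/-- A factorization is determined by the ground set sizes of its left factors. -/
lemma factorSet_ext {a b : Set (Set ℕ)}
    {q q' : (Set (Set ℕ) × Set (Set ℕ)) × Set (Set ℕ) × Set (Set ℕ)}
    (hq : q ∈ factorSet a b) (hq' : q' ∈ factorSet a b)
    (h1 : (⋃₀ q.1.1).ncard = (⋃₀ q'.1.1).ncard) (h2 : (⋃₀ q.2.1).ncard = (⋃₀ q'.2.1).ncard) :
    q = q' := by
  obtain ⟨x1, x2, x3, x4, x5, x6⟩ := hq
  obtain ⟨y1, y2, y3, y4, y5, y6⟩ := hq'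
  have e1 := concatIP_cancel x1 y1 x2 y2 h1 (x5.trans y5.symm)
  have e2 := concatIP_cancel x3 y3 x4 y4 h2 (x6.trans y6.symm)
  exact Prod.ext (Prod.ext e1.1 e1.2) (Prod.ext e2.1 e2.2)

lemma factorSet_finite {a b : Set (Set ℕ)} (ha : IsStdIP a) (hb : IsStdIP b) :
    (factorSet a b).Finite := by
  refine Finite.of_finite_image (f := fun q => ((⋃₀ q.1.1).ncard, (⋃₀ q.2.1).ncard))
    (((finite_Iic (⋃₀ a).ncard).prod (finite_Iic (⋃₀ b).ncard)).subset ?_) ?_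
  · rintro _ ⟨q, hq, rfl⟩
    exact ⟨ncard_le_of_concatIP ha hq.2.2.2.2.1, ncard_le_of_concatIP hb hq.2.2.2.2.2⟩
  · intro q hq q' hq' h
    exact factorSet_ext hq hq' (congrArg Prod.fst h) (congrArg Prod.snd h)

/-- Each block of `I` or `I'` lies inside a block of `glue I I' = s • t`, hence on one side of the
cut. -/
lemma block_low_or_high {s t I I' : Set (Set ℕ)} (hs : IsStdIP s) (ht : IsStdIP t)
    (h : glue I I' = concatIP s t) :
    ∀ B ∈ I ∪ I', (∀ x ∈ B, x ≤ (⋃₀ s).ncard) ∨ ∀ x ∈ B, (⋃₀ s).ncard < x := by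
  intro B hB
  obtain ⟨C, hC, hBC⟩ := subset_glue hB
  rw [h] at hC
  rcases hC with hC | ⟨D, hD, rfl⟩
  · exact Or.inl fun x hx => (hs.lowBlocks C hC).2 x (hBC hx)
  · refine Or.inr fun x hx => ?_
    obtain ⟨y, hy, rfl⟩ := hBC hx
    have := (ht.1.posBlocks D hD).2 y hy
    simp only
    omega

lemma secSet_concat {s t a b : Set (Set ℕ)} (hs : IsStdIP s) (ht : IsStdIP t) :
    secSet a b (concatIP s t) = ⋃ q ∈ factorSet a b,
      joinPair (⋃₀ s).ncard '' (secSet q.1.1 q.2.1 s ×ˢ secSet q.1.2 q.2.2 t) := by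
  apply Subset.antisymm
  · rintro ⟨A, A'⟩ ⟨_, I, I', ⟨hI, hA⟩, ⟨hI', hA'⟩, rfl, rfl, hg⟩
    dsimp only at hA hA'
    subst hA hA'
    have hb := block_low_or_high hs ht hg
    obtain ⟨P, Q, hP, hPn, hQ, rfl⟩ := exists_split hI fun B hB => hb B (Or.inl hB)
    obtain ⟨P', Q', hP', hPn', hQ', rfl⟩ := exists_split hI' fun B hB => hb B (Or.inr hB)
    rw [glue_join hPn hPn' hQ.posBlocks hQ'.posBlocks] at hg
    obtain ⟨h1, h2⟩ := join_cancel (glue_blocks hPn hPn') hs.lowBlocks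
      (glue_blocks hQ.posBlocks hQ'.posBlocks) ht.1.posBlocks hg
    refine mem_biUnion (x := ((stdIP P, stdIP Q), (stdIP P', stdIP Q'))) ?_ ?_
    · exact ⟨isStdIP_stdIP hP, isStdIP_stdIP hQ, isStdIP_stdIP hP', isStdIP_stdIP hQ',
        (stdIP_join hP hPn hQ).symm, (stdIP_join hP' hPn' hQ').symm⟩
    · refine ⟨((⋃₀ P, ⋃₀ P'), (⋃₀ Q, ⋃₀ Q')), ⟨⟨?_, P, P', ⟨hP, rfl⟩, ⟨hP', rfl⟩, rfl, rfl, h1⟩,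
        ⟨?_, Q, Q', ⟨hQ, rfl⟩, ⟨hQ', rfl⟩, rfl, rfl, h2⟩⟩, ?_⟩
      · rw [← h1, sUnion_glue]
      · rw [← h2, sUnion_glue]
      · simp only [joinPair, sUnion_union, sUnion_shiftIP]
  · refine iUnion₂_subset ?_
    rintro ⟨⟨a₁, a₂⟩, b₁, b₂⟩ ⟨_, _, _, _, rfl, rfl⟩
    rintro _ ⟨⟨⟨A, A'⟩, B, B'⟩, ⟨⟨_, P, P', ⟨hP, hA⟩, ⟨hP', hA'⟩, rfl, rfl, h1⟩,
      ⟨_, Q, Q', ⟨hQ, hB⟩, ⟨hQ', hB'⟩, rfl, rfl, h2⟩⟩, rfl⟩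
    dsimp only at hA hA' hB hB'
    subst hA hA' hB hB'
    have hlow : ∀ B ∈ P ∪ P', ∀ x ∈ B, x ≤ (⋃₀ s).ncard := fun B hB x hx => by
      obtain ⟨C, hC, hBC⟩ := subset_glue hB
      exact (hs.lowBlocks C (h1 ▸ hC)).2 x (hBC hx)
    have hPn : LowBlocks (⋃₀ s).ncard P := fun B hB =>
      ⟨(hP.2.1 B hB).1, hlow B (Or.inl hB)⟩
    have hPn' : LowBlocks (⋃₀ s).ncard P' := fun B hB =>
      ⟨(hP'.2.1 B hB).1, hlow B (Or.inr hB)⟩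
    have hg : glue (P ∪ shiftIP (⋃₀ s).ncard Q) (P' ∪ shiftIP (⋃₀ s).ncard Q') = concatIP s t := by
      rw [glue_join hPn hPn' hQ.posBlocks hQ'.posBlocks, h1, h2, concatIP]
    refine ⟨?_, _, _, ⟨isIntervalPartition_join hP hPn hQ, ?_⟩,
      ⟨isIntervalPartition_join hP' hPn' hQ', ?_⟩, stdIP_join hP hPn hQ, stdIP_join hP' hPn' hQ', hg⟩
    · rw [← hg, sUnion_glue]
      simp only [joinPair, sUnion_union, sUnion_shiftIP]
    · simp only [joinPair, sUnion_union, sUnion_shiftIP]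
    · simp only [joinPair, sUnion_union, sUnion_shiftIP]

/-- the quasi-shuffle coproduct is multiplicative with respect to
concatenation. -/
theorem secCoeff_concat (s t a b : Set (Set ℕ))
    (hs : IsStdIP s) (ht : IsStdIP t) (ha : IsStdIP a) (hb : IsStdIP b) :
    secCoeff a b (concatIP s t)
      = ∑ᶠ q ∈ {q : (Set (Set ℕ) × Set (Set ℕ)) × Set (Set ℕ) × Set (Set ℕ) |
            IsStdIP q.1.1 ∧ IsStdIP q.1.2 ∧ IsStdIP q.2.1 ∧ IsStdIP q.2.2 ∧
            concatIP q.1.1 q.1.2 = a ∧ concatIP q.2.1 q.2.2 = b},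
          secCoeff q.1.1 q.2.1 s * secCoeff q.1.2 q.2.2 t := by
  change (secSet a b (concatIP s t)).ncard = ∑ᶠ q ∈ factorSet a b,
    (secSet q.1.1 q.2.1 s).ncard * (secSet q.1.2 q.2.2 t).ncard
  have hfin : ∀ q : (Set (Set ℕ) × Set (Set ℕ)) × Set (Set ℕ) × Set (Set ℕ),
      (joinPair (⋃₀ s).ncard '' (secSet q.1.1 q.2.1 s ×ˢ secSet q.1.2 q.2.2 t)).Finite :=
    fun q => ((secSet_finite hs).prod (secSet_finite ht)).image _
  rw [secSet_concat hs ht, (factorSet_finite ha hb).ncard_biUnion (fun q _ => hfin q)]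
  · refine finsum_mem_congr rfl fun q _ => ?_
    rw [InjOn.ncard_image, ncard_prod]
    exact fun r hr r' hr' h => joinPair_inj hs ht hr hr' h
  · intro q hq q' hq' hne
    rw [Function.onFun, Set.disjoint_left]
    -- The pair of ground sets determines its two halves, hence the sizes of the left factors.
    rintro _ ⟨r, hr, rfl⟩ ⟨r', hr', h⟩
    obtain rfl := joinPair_inj hs ht hr' hr h
    have e := ncard_of_mem_secSet hr.1
    have e' := ncard_of_mem_secSet hr'.1
    exact hne (factorSet_ext hq hq' (e.1.trans e'.1.symm) (e.2.trans e'.2.symm))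
end
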